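/- Fix α ∈ (0, 1/16). For every integer ℓ ≥ 2 satisfying log₂ℓ / log₂log₂ℓ ≥ 1/α, the fraction of matrices K ∈ GL(ℓ,F₂) such that λ_{α,K}(z) < ℓ^{−1/2} holds for all z ∈ (0, 1/ℓ²) ∪ (1 − 1/ℓ², 1) is strictly greater than 1 − 1/ℓ. -/

import Mathlib

/-!
Write `L = log₂ ℓ`. The hypothesis forces `ℓ ^ α ≥ 2` and `L ^ 16 < ℓ` (`growth`). Take
`n = ⌈L⌉`, `d = n + 2` and `m = n (n + 3) + 2`.

If bit `i` is not decodable, the erasure set contains the support of a nonzero codeword `u K` with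
`u` vanishing before `i`. If it is decodable, duality provides a nonzero `v` supported on the
unerased positions with `K v` vanishing after `i`. So if every nonzero `x` for which `x K⁻¹`
vanishes on the first `m` coordinates has weight at least `d`, then `f_{K,i}(z)` is at most the
probability of at least `d` erasures for all but `m` indices `i`; similarly for `1 - f_{K,i}(z)` and vectors
`v` such that `K v` vanishes on the last `m` coordinates. For `K` uniform in `GL`, the image of a
fixed nonzero vector is uniform on nonzero vectors, so a union bound over the at most `ℓ ^ d`
low-weight vectors bounds each failure probability by `ℓ ^ d 2 ^ (-m) ≤ 1 / (4ℓ)`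
(`card_LowWt_mul_le`).

Near an endpoint, at distance `y < ℓ ^ (-2)`, the probability of at least `d` erasures (or nonerasures) is
at most `3 (ℓ y) ^ d ≤ 3 ℓ ^ (-n) y` (`sum_tail_le`), so the generic indices contribute
`O(y ^ α / ℓ)` to the average of `g_α`. The `m = O(L ^ 2)` exceptional ones have
`f = O(ℓ y)` and contribute `O(m ℓ ^ (α - 1) y ^ α)`. Both are far below `ℓ ^ (-1/2) y ^ α`
(`average_lt`).
-/

open scoped Classical

noncomputable section

/-- Bit `i` (0-indexed; it represents the 1-indexed bit `i+1`) is decodable under the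
kernel `K` and the erasure set `S`. -/
def Decodable (ℓ : ℕ) (K : Matrix (Fin ℓ) (Fin ℓ) (ZMod 2)) (i : Fin ℓ)
    (S : Finset (Fin ℓ)) : Prop :=
  ∀ u u' : Fin ℓ → ZMod 2,
    (∀ j : Fin ℓ, j < i → u j = u' j) →
    (∀ j : Fin ℓ, j ∉ S → Matrix.vecMul u K j = Matrix.vecMul u' K j) →
    u i = u' i

/-- The polarization behavior `f_{K,i}(z)` of the kernel `K`. -/
def fK (ℓ : ℕ) (K : Matrix (Fin ℓ) (Fin ℓ) (ZMod 2)) (i : Fin ℓ) (z : ℝ) : ℝ :=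
  ∑ S : Finset (Fin ℓ),
    if ¬ Decodable ℓ K i S then z ^ S.card * (1 - z) ^ (ℓ - S.card) else 0

/-- The polarization process `Z_m(z, b)`. -/
def Zproc (ℓ : ℕ) (K : Matrix (Fin ℓ) (Fin ℓ) (ZMod 2)) (z : ℝ) :
    (m : ℕ) → (Fin m → Fin ℓ) → ℝ
  | 0, _ => z
  | m + 1, b => fK ℓ K (b (Fin.last m)) (Zproc ℓ K z m (fun j => b j.castSucc))

/-- `g_α(z) = z^α (1-z)^α`. -/
def gfun (α z : ℝ) : ℝ := z ^ α * (1 - z) ^ α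

/-- `λ_{α,K}(z)`. -/
def lam (ℓ : ℕ) (K : Matrix (Fin ℓ) (Fin ℓ) (ZMod 2)) (α z : ℝ) : ℝ :=
  ((1 / (ℓ : ℝ)) * ∑ i : Fin ℓ, gfun α (fK ℓ K i z)) / gfun α z

/-- `λ*_{α,K} = sup_{z ∈ (0,1)} λ_{α,K}(z)`. -/
def lamStar (ℓ : ℕ) (K : Matrix (Fin ℓ) (Fin ℓ) (ZMod 2)) (α : ℝ) : ℝ :=
  sSup (lam ℓ K α '' Set.Ioo 0 1)

/-- `E_z[h(Z_m)]`, the uniform average over branch sequences `b`. -/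
def expZ (ℓ : ℕ) (K : Matrix (Fin ℓ) (Fin ℓ) (ZMod 2)) (z : ℝ) (m : ℕ) (h : ℝ → ℝ) : ℝ :=
  (∑ b : Fin m → Fin ℓ, h (Zproc ℓ K z m b)) / (ℓ : ℝ) ^ m


/-- The fraction of matrices `K ∈ GL(ℓ, F₂)` satisfying the property `P`. -/
def fracGL (ℓ : ℕ) (P : Matrix.GeneralLinearGroup (Fin ℓ) (ZMod 2) → Prop) : ℝ :=
  ((Finset.univ.filter P).card : ℝ) /
    (Fintype.card (Matrix.GeneralLinearGroup (Fin ℓ) (ZMod 2)) : ℝ)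

/-! ### Counting invertible matrices -/

/-- The Hamming weight of a binary vector, as the size of its support. -/
def wt {ℓ : ℕ} (v : Fin ℓ → ZMod 2) : ℕ := (Finset.univ.filter fun j => v j ≠ 0).card

/-- `GL` acts transitively on nonzero vectors. -/
lemma exists_GL_mulVec_eq {ℓ : ℕ} {v w : Fin ℓ → ZMod 2} (hv : v ≠ 0) (hw : w ≠ 0) :
    ∃ K : Matrix.GeneralLinearGroup (Fin ℓ) (ZMod 2),
      (K : Matrix (Fin ℓ) (Fin ℓ) (ZMod 2)).mulVec v = w := by
  obtain ⟨g, hg⟩ := Submodule.exists_linearEquiv_restrict_eq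
    ((LinearEquiv.toSpanNonzeroSingleton (ZMod 2) _ v hv).symm ≪≫ₗ
      LinearEquiv.toSpanNonzeroSingleton (ZMod 2) _ w hw)
  have h1 := hg (LinearEquiv.toSpanNonzeroSingleton (ZMod 2) _ v hv 1)
  refine ⟨Matrix.GeneralLinearGroup.toLin.symm (LinearMap.GeneralLinearGroup.ofLinearEquiv g), ?_⟩
  rw [← Matrix.mulVecLin_apply, ← Matrix.GeneralLinearGroup.toLin_apply, MulEquiv.apply_symm_apply]
  rw [LinearEquiv.trans_apply, LinearEquiv.symm_apply_apply,
    LinearEquiv.toSpanNonzeroSingleton_one, LinearEquiv.toSpanNonzeroSingleton_one] at h1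
  exact h1.symm

lemma card_fiber_eq {ℓ : ℕ} {v w w' : Fin ℓ → ZMod 2} (hw : w ≠ 0) (hw' : w' ≠ 0) :
    (Finset.univ.filter fun K : Matrix.GeneralLinearGroup (Fin ℓ) (ZMod 2) =>
      (K : Matrix (Fin ℓ) (Fin ℓ) (ZMod 2)).mulVec v = w).card =
    (Finset.univ.filter fun K : Matrix.GeneralLinearGroup (Fin ℓ) (ZMod 2) =>
      (K : Matrix (Fin ℓ) (Fin ℓ) (ZMod 2)).mulVec v = w').card := by
  obtain ⟨M, hM⟩ := exists_GL_mulVec_eq hw hw'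
  refine Finset.card_bij' (fun K _ => M * K) (fun K _ => M⁻¹ * K) ?_ ?_ ?_ ?_
  · intro K hK
    simp only [Finset.mem_filter, Finset.mem_univ, true_and] at hK ⊢
    rw [Units.val_mul, ← Matrix.mulVec_mulVec, hK, hM]
  · intro K hK
    simp only [Finset.mem_filter, Finset.mem_univ, true_and] at hK ⊢
    rw [Units.val_mul, ← Matrix.mulVec_mulVec, hK, ← hM, Matrix.mulVec_mulVec, ← Units.val_mul]
    simp
  · intro K _; simp
  · intro K _; simp

lemma mulVec_GL_ne_zero {ℓ : ℕ} (K : Matrix.GeneralLinearGroup (Fin ℓ) (ZMod 2))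
    {v : Fin ℓ → ZMod 2} (hv : v ≠ 0) :
    (K : Matrix (Fin ℓ) (Fin ℓ) (ZMod 2)).mulVec v ≠ 0 := by
  intro h
  apply hv
  have : (((K⁻¹ * K : Matrix.GeneralLinearGroup (Fin ℓ) (ZMod 2))) :
      Matrix (Fin ℓ) (Fin ℓ) (ZMod 2)).mulVec v = 0 := by
    rw [Units.val_mul, ← Matrix.mulVec_mulVec, h, Matrix.mulVec_zero]
  simpa using this

/-- A translate of the punctured subspace `{w ≠ 0 : w = 0 on T}` by any vector supported on `T`
avoids zero, and the translates are disjoint. -/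
lemma card_zero_on_mul_le {ℓ : ℕ} (T : Finset (Fin ℓ)) :
    (Finset.univ.filter fun w : Fin ℓ → ZMod 2 => w ≠ 0 ∧ ∀ j ∈ T, w j = 0).card * 2 ^ T.card ≤
      (Finset.univ.filter fun w : Fin ℓ → ZMod 2 => w ≠ 0).card := by
  have h2 : 2 ^ T.card = (Finset.univ : Finset (T → ZMod 2)).card := by
    simp [ZMod.card]
  rw [h2, ← Finset.card_product]
  refine Finset.card_le_card_of_injOn
    (fun p j => if h : j ∈ T then p.2 ⟨j, h⟩ else p.1 j) ?_ ?_
  · rintro ⟨w, a⟩ h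
    simp only [Finset.coe_product, Finset.coe_filter, Finset.mem_univ, true_and, Set.mem_prod,
      Set.mem_ofPred_eq] at h ⊢
    intro h0
    apply h.1.1
    ext j
    by_cases hj : j ∈ T
    · exact h.1.2 j hj
    · simpa [hj] using congrFun h0 j
  · rintro ⟨w, a⟩ h ⟨w', a'⟩ h' heq
    simp only [Finset.coe_product, Finset.coe_filter, Finset.mem_univ, true_and, Set.mem_prod,
      Set.mem_ofPred_eq] at h h'
    simp only [Prod.mk.injEq]
    constructor
    · ext j
      by_cases hj : j ∈ T
      · rw [h.1.2 j hj, h'.1.2 j hj]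
      · simpa [hj] using congrFun heq j
    · ext ⟨j, hj⟩
      simpa [hj] using congrFun heq j

/-- For fixed `v ≠ 0`, the image `K v` of a uniformly random `K` is uniform on nonzero vectors, so
it vanishes on `T` with probability at most `2 ^ (-|T|)`. -/
lemma card_GL_zero_on_mul_le {ℓ : ℕ} (T : Finset (Fin ℓ)) {v : Fin ℓ → ZMod 2} (hv : v ≠ 0) :
    (Finset.univ.filter fun K : Matrix.GeneralLinearGroup (Fin ℓ) (ZMod 2) =>
      ∀ j ∈ T, (K : Matrix (Fin ℓ) (Fin ℓ) (ZMod 2)).mulVec v j = 0).card * 2 ^ T.card ≤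
      Fintype.card (Matrix.GeneralLinearGroup (Fin ℓ) (ZMod 2)) := by
  have key : ∀ P : (Fin ℓ → ZMod 2) → Prop,
      (Finset.univ.filter fun K : Matrix.GeneralLinearGroup (Fin ℓ) (ZMod 2) =>
        P ((K : Matrix (Fin ℓ) (Fin ℓ) (ZMod 2)).mulVec v)).card =
      (Finset.univ.filter fun w : Fin ℓ → ZMod 2 => w ≠ 0 ∧ P w).card *
      (Finset.univ.filter fun K : Matrix.GeneralLinearGroup (Fin ℓ) (ZMod 2) =>
        (K : Matrix (Fin ℓ) (Fin ℓ) (ZMod 2)).mulVec v = v).card := by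
    intro P
    rw [Finset.card_eq_sum_card_fiberwise
      (f := fun K : Matrix.GeneralLinearGroup (Fin ℓ) (ZMod 2) =>
        (K : Matrix (Fin ℓ) (Fin ℓ) (ZMod 2)).mulVec v)
      (t := Finset.univ.filter fun w : Fin ℓ → ZMod 2 => w ≠ 0 ∧ P w)]
    · rw [← smul_eq_mul]
      refine Finset.sum_eq_card_nsmul fun w hw => ?_
      simp only [Finset.mem_filter, Finset.mem_univ, true_and] at hw
      rw [← card_fiber_eq (v := v) hw.1 hv, Finset.filter_filter]
      congr 1
      ext K
      simp only [Finset.mem_filter, Finset.mem_univ, true_and, and_iff_right_iff_imp]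
      rintro rfl
      exact hw.2
    · intro K hK
      simp only [Finset.coe_filter, Finset.mem_univ, true_and, Set.mem_ofPred_eq] at hK ⊢
      exact ⟨mulVec_GL_ne_zero K hv, hK⟩
  have h1 := key fun w => ∀ j ∈ T, w j = 0
  have h2 := key fun _ => True
  simp only [Finset.filter_true, and_true, Finset.card_univ] at h2
  have h3 := Nat.mul_le_mul_right
    (Finset.univ.filter fun K : Matrix.GeneralLinearGroup (Fin ℓ) (ZMod 2) =>
        (K : Matrix (Fin ℓ) (Fin ℓ) (ZMod 2)).mulVec v = v).card (card_zero_on_mul_le T)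
  rw [h2]
  refine le_trans (le_of_eq ?_) h3
  rw [mul_right_comm]
  congr 1
  convert h1

lemma card_low_weight_le {ℓ : ℕ} (hℓ : 2 ≤ ℓ) (d : ℕ) :
    (Finset.univ.filter fun v : Fin ℓ → ZMod 2 => wt v < d).card ≤ ℓ ^ d := by
  calc (Finset.univ.filter fun v : Fin ℓ → ZMod 2 => wt v < d).card
      ≤ ((Finset.range d).biUnion fun k =>
          Finset.powersetCard k (Finset.univ : Finset (Fin ℓ))).card := by
        refine Finset.card_le_card_of_injOn
          (fun v => Finset.univ.filter fun j => v j ≠ 0) ?_ ?_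
        · intro v hv
          simp only [Finset.coe_filter, Finset.mem_univ, true_and, Set.mem_ofPred_eq] at hv
          simp only [Finset.coe_biUnion, Set.mem_iUnion, Finset.mem_coe, Finset.mem_range,
            Finset.mem_powersetCard, Finset.subset_univ, true_and]
          exact ⟨wt v, hv, rfl⟩
        · intro v _ w _ h
          ext1 j
          have hj := Finset.ext_iff.1 h j
          simp only [Finset.mem_filter, Finset.mem_univ, true_and] at hj
          have : ∀ a b : ZMod 2, (a ≠ 0 ↔ b ≠ 0) → a = b := by decide
          exact this _ _ hj
    _ ≤ ∑ k ∈ Finset.range d, (Finset.powersetCard k (Finset.univ : Finset (Fin ℓ))).card :=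
        Finset.card_biUnion_le
    _ ≤ ∑ k ∈ Finset.range d, ℓ ^ k := by
        refine Finset.sum_le_sum fun k _ => ?_
        rw [Finset.card_powersetCard, Finset.card_univ, Fintype.card_fin]
        exact Nat.choose_le_pow ℓ k
    _ ≤ ℓ ^ d := (Nat.geomSum_lt hℓ (by simp)).le

/-- `K` maps some nonzero vector of weight below `d` to a vector vanishing on `T`. -/
def LowWt {ℓ : ℕ} (d : ℕ) (T : Finset (Fin ℓ)) (K : Matrix (Fin ℓ) (Fin ℓ) (ZMod 2)) : Prop :=
  ∃ v : Fin ℓ → ZMod 2, v ≠ 0 ∧ wt v < d ∧ ∀ j ∈ T, K.mulVec v j = 0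

/-- Union bound over the low-weight vectors. -/
lemma card_LowWt_mul_le {ℓ : ℕ} (hℓ : 2 ≤ ℓ) (d : ℕ) (T : Finset (Fin ℓ)) :
    (Finset.univ.filter fun K : Matrix.GeneralLinearGroup (Fin ℓ) (ZMod 2) =>
      LowWt d T (K : Matrix (Fin ℓ) (Fin ℓ) (ZMod 2))).card * 2 ^ T.card ≤
      ℓ ^ d * Fintype.card (Matrix.GeneralLinearGroup (Fin ℓ) (ZMod 2)) := by
  have hsub : (Finset.univ.filter fun K : Matrix.GeneralLinearGroup (Fin ℓ) (ZMod 2) =>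
      LowWt d T (K : Matrix (Fin ℓ) (Fin ℓ) (ZMod 2))) ⊆
      (Finset.univ.filter fun v : Fin ℓ → ZMod 2 => v ≠ 0 ∧ wt v < d).biUnion fun v =>
        Finset.univ.filter fun K : Matrix.GeneralLinearGroup (Fin ℓ) (ZMod 2) =>
          ∀ j ∈ T, (K : Matrix (Fin ℓ) (Fin ℓ) (ZMod 2)).mulVec v j = 0 := by
    intro K hK
    simp only [Finset.mem_filter, Finset.mem_univ, true_and] at hK
    obtain ⟨v, hv, hd, hT⟩ := hK
    simp only [Finset.mem_biUnion, Finset.mem_filter, Finset.mem_univ, true_and]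
    exact ⟨v, ⟨hv, hd⟩, hT⟩
  calc _ ≤ (∑ v ∈ Finset.univ.filter fun v : Fin ℓ → ZMod 2 => v ≠ 0 ∧ wt v < d,
        (Finset.univ.filter fun K : Matrix.GeneralLinearGroup (Fin ℓ) (ZMod 2) =>
          ∀ j ∈ T, (K : Matrix (Fin ℓ) (Fin ℓ) (ZMod 2)).mulVec v j = 0).card) * 2 ^ T.card :=
        Nat.mul_le_mul_right _ ((Finset.card_le_card hsub).trans Finset.card_biUnion_le)
    _ ≤ (Finset.univ.filter fun v : Fin ℓ → ZMod 2 => v ≠ 0 ∧ wt v < d).card *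
        Fintype.card (Matrix.GeneralLinearGroup (Fin ℓ) (ZMod 2)) := by
        rw [Finset.sum_mul, ← smul_eq_mul]
        refine Finset.sum_le_card_nsmul _ _ _ fun v hv => ?_
        simp only [Finset.mem_filter, Finset.mem_univ, true_and] at hv
        exact card_GL_zero_on_mul_le T hv.1
    _ ≤ _ := by
        refine Nat.mul_le_mul_right _ (le_trans (Finset.card_le_card ?_) (card_low_weight_le hℓ d))
        intro v hv
        simp only [Finset.mem_filter, Finset.mem_univ, true_and] at hv ⊢
        exact hv.2

/-- Inverse transpose permutes `GL`, so the same bound holds for the dual kernel. -/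
lemma card_LowWt_dual_mul_le {ℓ : ℕ} (hℓ : 2 ≤ ℓ) (d : ℕ) (T : Finset (Fin ℓ)) :
    (Finset.univ.filter fun K : Matrix.GeneralLinearGroup (Fin ℓ) (ZMod 2) =>
      LowWt d T (K : Matrix (Fin ℓ) (Fin ℓ) (ZMod 2))⁻¹.transpose).card * 2 ^ T.card ≤
      ℓ ^ d * Fintype.card (Matrix.GeneralLinearGroup (Fin ℓ) (ZMod 2)) := by
  refine le_trans (Nat.mul_le_mul_right _ ?_) (card_LowWt_mul_le hℓ d T)
  refine Finset.card_le_card_of_injOn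
    (fun K => Matrix.GeneralLinearGroup.mkOfDetNeZero
      (K : Matrix (Fin ℓ) (Fin ℓ) (ZMod 2))⁻¹.transpose ?_) ?_ ?_
  · rw [Matrix.det_transpose, ← Matrix.GeneralLinearGroup.coe_inv]
    exact Matrix.GeneralLinearGroup.det_ne_zero _
  · intro K hK
    simp only [Finset.coe_filter, Finset.mem_univ, true_and, Set.mem_ofPred_eq] at hK ⊢
    exact hK
  · intro K _ K' _ h
    have h1 := congrArg (fun M : Matrix.GeneralLinearGroup (Fin ℓ) (ZMod 2) =>
      (M : Matrix (Fin ℓ) (Fin ℓ) (ZMod 2)).transpose) h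
    have h2 : (K : Matrix (Fin ℓ) (Fin ℓ) (ZMod 2))⁻¹ = (K' : Matrix (Fin ℓ) (Fin ℓ) (ZMod 2))⁻¹ := by
      simpa [Matrix.GeneralLinearGroup.mkOfDetNeZero] using h1
    rw [← Matrix.GeneralLinearGroup.coe_inv, ← Matrix.GeneralLinearGroup.coe_inv] at h2
    exact inv_injective (Units.ext h2)

/-! ### Erasure sums -/

lemma sum_weight_eq_one (ℓ : ℕ) (z : ℝ) :
    ∑ S : Finset (Fin ℓ), z ^ S.card * (1 - z) ^ (ℓ - S.card) = 1 := by
  have h := Fintype.sum_pow_mul_eq_add_pow (Fin ℓ) z (1 - z)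
  simpa using h

/-- Chernoff-type tail bound: the number of erasures is at least `d` with probability at most
`3 (ℓ z) ^ d`. The tilt replaces `z` by `1 / ℓ`, and `(1 + 1 / ℓ) ^ ℓ ≤ e ≤ 3`. -/
lemma sum_tail_le {ℓ : ℕ} (hℓ : 2 ≤ ℓ) {z : ℝ} (hz : 0 < z) (hlz : (ℓ : ℝ) * z ≤ 1) (d : ℕ)
    (P : Finset (Fin ℓ) → Prop) [DecidablePred P] (hP : ∀ S, P S → d ≤ S.card) :
    ∑ S : Finset (Fin ℓ), (if P S then z ^ S.card * (1 - z) ^ (ℓ - S.card) else 0) ≤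
      3 * ((ℓ : ℝ) * z) ^ d := by
  have hl : (2 : ℝ) ≤ ℓ := by exact_mod_cast hℓ
  have hz1 : z ≤ 1 := by nlinarith
  have hl0 : (0 : ℝ) < ℓ := by linarith
  calc ∑ S : Finset (Fin ℓ), (if P S then z ^ S.card * (1 - z) ^ (ℓ - S.card) else 0)
      ≤ ∑ S : Finset (Fin ℓ),
          ((ℓ : ℝ) * z) ^ d * ((1 / (ℓ : ℝ)) ^ S.card * (1 - z) ^ (ℓ - S.card)) := by
        refine Finset.sum_le_sum fun S _ => ?_
        have h1 : 0 ≤ (1 - z) ^ (ℓ - S.card) := pow_nonneg (by linarith) _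
        split_ifs with h
        · rw [← mul_assoc]
          refine mul_le_mul_of_nonneg_right ?_ h1
          have h2 : z ^ S.card = ((ℓ : ℝ) * z) ^ S.card * (1 / (ℓ : ℝ)) ^ S.card := by
            rw [← mul_pow]; congr 1; field_simp
          rw [h2]
          exact mul_le_mul_of_nonneg_right
            (pow_le_pow_of_le_one (by positivity) hlz (hP S h)) (by positivity)
        · positivity
    _ = ((ℓ : ℝ) * z) ^ d * (1 / (ℓ : ℝ) + (1 - z)) ^ ℓ := by
        rw [← Finset.mul_sum]
        have h := Fintype.sum_pow_mul_eq_add_pow (Fin ℓ) (1 / (ℓ : ℝ)) (1 - z)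
        rw [Fintype.card_fin] at h
        rw [h]
    _ ≤ ((ℓ : ℝ) * z) ^ d * 3 := by
        refine mul_le_mul_of_nonneg_left ?_ (by positivity)
        have h1 : 0 ≤ 1 / (ℓ : ℝ) := by positivity
        calc (1 / (ℓ : ℝ) + (1 - z)) ^ ℓ ≤ (Real.exp (1 / (ℓ : ℝ))) ^ ℓ := by
              refine pow_le_pow_left₀ (by linarith) ?_ _
              linarith [Real.add_one_le_exp (1 / (ℓ : ℝ))]
          _ = Real.exp 1 := by
              rw [← Real.exp_nat_mul]; congr 1; field_simp
          _ ≤ 3 := by linarith [Real.exp_one_lt_d9]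
    _ = _ := by ring

/-- Complementing the erasure set turns `1 - f(z)` into a sum of the same shape at `1 - z`. -/
lemma one_sub_fK (ℓ : ℕ) (K : Matrix (Fin ℓ) (Fin ℓ) (ZMod 2)) (i : Fin ℓ) (z : ℝ) :
    1 - fK ℓ K i z = ∑ S : Finset (Fin ℓ),
      if Decodable ℓ K i Sᶜ then (1 - z) ^ S.card * (1 - (1 - z)) ^ (ℓ - S.card) else 0 := by
  rw [show 1 - fK ℓ K i z = ∑ S : Finset (Fin ℓ), z ^ S.card * (1 - z) ^ (ℓ - S.card) -
    fK ℓ K i z by rw [sum_weight_eq_one], fK, ← Finset.sum_sub_distrib]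
  refine Fintype.sum_equiv (Equiv.ofBijective _ (compl_bijective (α := Finset (Fin ℓ)))) _ _ ?_
  intro S
  have hS : S.card ≤ ℓ := by simpa using Finset.card_le_univ S
  simp only [Equiv.ofBijective_apply, compl_compl, Finset.card_compl, Fintype.card_fin,
    sub_sub_cancel, Nat.sub_sub_self hS]
  by_cases h : Decodable ℓ K i S
  · simp [h, mul_comm]
  · simp [h]

lemma fK_nonneg (ℓ : ℕ) (K : Matrix (Fin ℓ) (Fin ℓ) (ZMod 2)) (i : Fin ℓ) {z : ℝ}
    (hz : z ∈ Set.Ioo (0 : ℝ) 1) : 0 ≤ fK ℓ K i z := by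
  refine Finset.sum_nonneg fun S _ => ?_
  have h1 : 0 ≤ (1 - z) ^ (ℓ - S.card) := pow_nonneg (by linarith [hz.2]) _
  have h2 : 0 ≤ z ^ S.card := pow_nonneg hz.1.le _
  split_ifs <;> positivity

lemma fK_le_one (ℓ : ℕ) (K : Matrix (Fin ℓ) (Fin ℓ) (ZMod 2)) (i : Fin ℓ) {z : ℝ}
    (hz : z ∈ Set.Ioo (0 : ℝ) 1) : fK ℓ K i z ≤ 1 := by
  rw [← sub_nonneg, one_sub_fK]
  refine Finset.sum_nonneg fun S _ => ?_
  have h1 : 0 ≤ (1 - z) ^ S.card := pow_nonneg (by linarith [hz.2]) _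
  have h2 : 0 ≤ (1 - (1 - z)) ^ (ℓ - S.card) := pow_nonneg (by linarith [hz.1]) _
  split_ifs <;> positivity

/-! ### Decodability and low-weight vectors -/

/-- If bit `i` is not decodable, some codeword with leading message position `i` is hidden by the
erasures. -/
lemma exists_of_not_decodable {ℓ : ℕ} {K : Matrix (Fin ℓ) (Fin ℓ) (ZMod 2)} {i : Fin ℓ}
    {S : Finset (Fin ℓ)} (h : ¬ Decodable ℓ K i S) :
    ∃ u : Fin ℓ → ZMod 2, u ≠ 0 ∧ (∀ j < i, u j = 0) ∧ ∀ j ∉ S, Matrix.vecMul u K j = 0 := by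
  unfold Decodable at h
  push Not at h
  obtain ⟨u, u', h1, h2, h3⟩ := h
  refine ⟨u - u', ?_, ?_, ?_⟩
  · intro h0
    exact h3 (sub_eq_zero.1 (congrFun h0 i))
  · intro j hj
    simp [h1 j hj]
  · intro j hj
    rw [Matrix.sub_vecMul, Pi.sub_apply, h2 j hj, sub_self]

/-- If bit `i` is decodable, then by duality `e_i` is a combination of the unerased columns of `K`
and of the `e_j` with `j < i`. -/
lemma exists_of_decodable {ℓ : ℕ} {K : Matrix (Fin ℓ) (Fin ℓ) (ZMod 2)} {i : Fin ℓ}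
    {S : Finset (Fin ℓ)} (h : Decodable ℓ K i S) :
    ∃ v : Fin ℓ → ZMod 2, v ≠ 0 ∧ (∀ j ∈ S, v j = 0) ∧ ∀ j, i < j → K.mulVec v j = 0 := by
  let L : {j : Fin ℓ // j < i} ⊕ {j : Fin ℓ // j ∉ S} → (Fin ℓ → ZMod 2) →ₗ[ZMod 2] ZMod 2 :=
    Sum.elim (fun j => LinearMap.proj j.1) (fun j => LinearMap.proj j.1 ∘ₗ K.vecMulLinear)
  have hmem : (LinearMap.proj i : (Fin ℓ → ZMod 2) →ₗ[ZMod 2] ZMod 2) ∈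
      Submodule.span (ZMod 2) (Set.range L) := by
    refine mem_span_of_iInf_ker_le_ker fun u hu => ?_
    rw [Submodule.mem_iInf] at hu
    rw [LinearMap.mem_ker, LinearMap.proj_apply]
    refine h u 0 (fun j hj => ?_) (fun j hj => ?_)
    · simpa [L] using hu (Sum.inl ⟨j, hj⟩)
    · simpa [L] using hu (Sum.inr ⟨j, hj⟩)
  obtain ⟨c, hc⟩ := (Submodule.mem_span_range_iff_exists_fun _).1 hmem
  let v : Fin ℓ → ZMod 2 := fun j => if hj : j ∉ S then c (Sum.inr ⟨j, hj⟩) else 0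
  have hv : ∀ j, (if j = i then 1 else 0 : ZMod 2) =
      (if hj : j < i then c (Sum.inl ⟨j, hj⟩) else 0) + K.mulVec v j := by
    intro j
    have := LinearMap.congr_fun hc (Pi.single j 1)
    simp only [L, Fintype.sum_sum_type, LinearMap.add_apply, LinearMap.sum_apply,
      LinearMap.smul_apply, Sum.elim_inl, Sum.elim_inr, LinearMap.comp_apply, LinearMap.proj_apply,
      Matrix.vecMulLinear_apply, Matrix.single_one_vecMul, smul_eq_mul, Pi.single_apply] at this
    rw [show (if j = i then 1 else 0 : ZMod 2) = if i = j then 1 else 0 by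
      simp only [eq_comm], ← this]
    congr 1
    · split_ifs with hj
      · rw [Finset.sum_eq_single ⟨j, hj⟩]
        · simp
        · intro b _ hb
          rw [if_neg, mul_zero]
          exact fun h => hb (Subtype.ext h)
        · simp
      · refine Finset.sum_eq_zero fun b _ => ?_
        rw [if_neg, mul_zero]
        exact fun h => hj (h ▸ b.2)
    · rw [Matrix.mulVec, dotProduct,
        ← Finset.sum_subset (Finset.subset_univ (Finset.univ.filter fun k => k ∉ S))]
      · rw [← Finset.sum_subtype_eq_sum_filter]
        simp only [Finset.subtype_univ]
        refine Finset.sum_congr rfl fun b _ => ?_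
        simp only [v, dif_pos b.2, Matrix.row]
        ring
      · intro k _ hk
        have hk' : ¬ (k ∉ S) := by simpa using hk
        simp only [v, dif_neg hk', mul_zero]
  refine ⟨v, ?_, ?_, ?_⟩
  · intro h0
    have := hv i
    rw [h0] at this
    simp at this
  · intro j hj
    simp [v, hj]
  · intro j hj
    have := hv j
    rw [if_neg hj.ne', dif_neg hj.le.not_gt, zero_add] at this
    exact this.symm

lemma wt_le_card {ℓ : ℕ} {v : Fin ℓ → ZMod 2} {S : Finset (Fin ℓ)} (h : ∀ j ∉ S, v j = 0) :
    wt v ≤ S.card := by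
  refine Finset.card_le_card fun j hj => ?_
  by_contra hS
  exact (Finset.mem_filter.1 hj).2 (h j hS)

lemma wt_pos {ℓ : ℕ} {v : Fin ℓ → ZMod 2} (h : v ≠ 0) : 1 ≤ wt v := by
  obtain ⟨j, hj⟩ := Function.ne_iff.1 h
  exact Finset.card_pos.2 ⟨j, by simpa using hj⟩

/-- A nonzero low-weight vector `u K` with `u` vanishing on `T` is what `LowWt` detects for the
dual kernel, since `(u K) K⁻¹ = u`. -/
lemma le_card_of_not_decodable {ℓ : ℕ} {K : Matrix.GeneralLinearGroup (Fin ℓ) (ZMod 2)}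
    {i : Fin ℓ} {S : Finset (Fin ℓ)}
    (h : ¬ Decodable ℓ (K : Matrix (Fin ℓ) (Fin ℓ) (ZMod 2)) i S) :
    1 ≤ S.card ∧ ∀ (d : ℕ) (T : Finset (Fin ℓ)), (∀ j ∈ T, j < i) →
      ¬ LowWt d T (K : Matrix (Fin ℓ) (Fin ℓ) (ZMod 2))⁻¹.transpose → d ≤ S.card := by
  obtain ⟨u, hu, hi, hS⟩ := exists_of_not_decodable h
  set x := Matrix.vecMul u (K : Matrix (Fin ℓ) (Fin ℓ) (ZMod 2)) with hx
  have hxu : Matrix.vecMul x (K : Matrix (Fin ℓ) (Fin ℓ) (ZMod 2))⁻¹ = u := by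
    rw [hx, Matrix.vecMul_vecMul, ← Matrix.GeneralLinearGroup.coe_inv, ← Units.val_mul]
    simp
  have hx0 : x ≠ 0 := by
    rintro h0
    rw [h0, Matrix.zero_vecMul] at hxu
    exact hu hxu.symm
  refine ⟨(wt_pos hx0).trans (wt_le_card hS), fun d T hT hL => ?_⟩
  by_contra hd
  refine hL ⟨x, hx0, (wt_le_card hS).trans_lt (not_le.1 hd), fun j hj => ?_⟩
  rw [Matrix.mulVec_transpose, hxu]
  exact hi j (hT j hj)

lemma le_card_of_decodable {ℓ : ℕ} {K : Matrix (Fin ℓ) (Fin ℓ) (ZMod 2)}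
    {i : Fin ℓ} {S : Finset (Fin ℓ)} (h : Decodable ℓ K i Sᶜ) :
    1 ≤ S.card ∧ ∀ (d : ℕ) (T : Finset (Fin ℓ)), (∀ j ∈ T, i < j) → ¬ LowWt d T K →
      d ≤ S.card := by
  obtain ⟨v, hv, hS, hi⟩ := exists_of_decodable h
  have hS' : ∀ j ∉ S, v j = 0 := fun j hj => hS j (by simpa using hj)
  refine ⟨(wt_pos hv).trans (wt_le_card hS'), fun d T hT hL => ?_⟩
  by_contra hd
  exact hL ⟨v, hv, (wt_le_card hS').trans_lt (not_le.1 hd), fun j hj => hi j (hT j hj)⟩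

/-! ### Real estimates and assembly -/

/-- With `L = log₂ ℓ`, the hypothesis on `ℓ` forces `ℓ ^ α ≥ 2`, `L ^ 16 < ℓ` and `L ≥ 8`. -/
lemma growth {α : ℝ} (hα : α ∈ Set.Ioo (0 : ℝ) (1 / 16)) {ℓ : ℕ} (hℓ : 2 ≤ ℓ)
    (hcond : Real.logb 2 ℓ / Real.logb 2 (Real.logb 2 ℓ) ≥ 1 / α) :
    2 ≤ (ℓ : ℝ) ^ α ∧ 8 ≤ Real.logb 2 ℓ ∧ Real.logb 2 ℓ ^ (16 : ℕ) < ℓ := by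
  obtain ⟨h0, h1⟩ := hα
  set L := Real.logb 2 ℓ with hL
  have hl2 : (2 : ℝ) ≤ ℓ := by exact_mod_cast hℓ
  have hl0 : (0 : ℝ) < ℓ := by linarith
  have hα' : 16 < 1 / α := by rw [lt_div_iff₀ h0]; linarith
  have h2L : (2 : ℝ) ^ L = ℓ := Real.rpow_logb (by norm_num) (by norm_num) hl0
  have hmono : ∀ (a : ℝ) (x : ℝ), 0 < x → (2 : ℝ) ^ a < x → a < Real.logb 2 x := fun a x hx h =>
    (Real.lt_logb_iff_rpow_lt (by norm_num) hx).2 h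
  -- At `ℓ = 2` the iterated logarithm vanishes and the quotient takes the value `0`.
  have hℓ3 : 3 ≤ ℓ := by
    by_contra h
    have : ℓ = 2 := by omega
    have hL1 : L = 1 := by rw [hL, this]; simp
    rw [hL1] at hcond
    simp at hcond
    linarith
  have hL32 : 3 / 2 < L := by
    have h3 : (3 : ℝ) ≤ ℓ := by exact_mod_cast hℓ3
    refine hmono _ _ hl0 (lt_of_lt_of_le ?_ h3)
    have h8 : ((2 : ℝ) ^ (3 / 2 : ℝ)) ^ (2 : ℕ) = 8 := by
      rw [← Real.rpow_natCast, ← Real.rpow_mul (by norm_num)]; norm_num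
    have : 0 < (2 : ℝ) ^ (3 / 2 : ℝ) := by positivity
    nlinarith
  set M := Real.logb 2 L with hM
  have h2M : (2 : ℝ) ^ M = L := Real.rpow_logb (by norm_num) (by norm_num) (by linarith)
  have hM12 : 1 / 2 < M := by
    refine hmono _ _ (by linarith) (lt_trans ?_ hL32)
    have h8 : ((2 : ℝ) ^ (1 / 2 : ℝ)) ^ (2 : ℕ) = 2 := by
      rw [← Real.rpow_natCast, ← Real.rpow_mul (by norm_num)]; norm_num
    have : 0 < (2 : ℝ) ^ (1 / 2 : ℝ) := by positivity
    nlinarith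
  have hM0 : 0 < M := by linarith
  have hLM : 1 / α * M ≤ L := (le_div_iff₀ hM0).1 hcond
  have hLM16 : 16 * M < L := by nlinarith
  have hL8 : 8 < L := by linarith
  have hM1 : 1 < M := hmono _ _ (by linarith) (by rw [Real.rpow_one]; linarith)
  have hαL : M ≤ L * α := by
    rw [one_div, inv_mul_le_iff₀ h0] at hLM
    linarith
  refine ⟨?_, hL8.le, ?_⟩
  · rw [← h2L, ← Real.rpow_mul (by norm_num)]
    calc (2 : ℝ) = 2 ^ (1 : ℝ) := (Real.rpow_one 2).symm
      _ ≤ _ := Real.rpow_le_rpow_of_exponent_le (by norm_num) (by linarith)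
  · nth_rewrite 1 [← h2M]
    rw [← h2L, ← Real.rpow_natCast, ← Real.rpow_mul (by norm_num)]
    exact Real.rpow_lt_rpow_of_exponent_lt (by norm_num) (by push_cast; linarith)

lemma gfun_le_rpow {α x : ℝ} (hα : 0 < α) (h0 : 0 ≤ x) (h1 : x ≤ 1) :
    gfun α x ≤ x ^ α ∧ gfun α x ≤ (1 - x) ^ α := by
  have hx : x ^ α ≤ 1 := Real.rpow_le_one h0 h1 hα.le
  have hx' : (1 - x) ^ α ≤ 1 := Real.rpow_le_one (by linarith) (by linarith) hα.le
  have p : 0 ≤ x ^ α := Real.rpow_nonneg h0 _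
  have p' : 0 ≤ (1 - x) ^ α := Real.rpow_nonneg (by linarith) _
  exact ⟨mul_le_of_le_one_right p hx', mul_le_of_le_one_left p' hx⟩

lemma gfun_symm (α x : ℝ) : gfun α (1 - x) = gfun α x := by
  rw [gfun, gfun, sub_sub_cancel, mul_comm]

/-- The analytic estimate near an endpoint: if all `F i` are `O(ℓ y)` and all but `m` of them are
`O((ℓ y) ^ (n + 2))` with `ℓ ≤ 2 ^ n`, then the average of `F i ^ α` is below
`ℓ ^ (-1/2) g_α(y)`. The exceptional indices contribute `(m / ℓ) ℓ ^ α y ^ α`; for the others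
`(ℓ y) ^ (n + 2) ≤ ℓ ^ (-n) y` and `ℓ ^ (α n) ≥ 2 ^ n ≥ ℓ`. -/
lemma average_lt {α : ℝ} (hα : α ∈ Set.Ioo (0 : ℝ) (1 / 16)) {ℓ : ℕ} (hℓ : 2 ≤ ℓ)
    (h2 : 2 ≤ (ℓ : ℝ) ^ α) {n m : ℕ} (hn : (ℓ : ℝ) ≤ 2 ^ n)
    (hm : 4 * ((m : ℝ) + 1) < (ℓ : ℝ) ^ (7 / 16 : ℝ)) {y : ℝ}
    (hy : y ∈ Set.Ioo (0 : ℝ) (1 / (ℓ : ℝ) ^ 2)) (F : Fin ℓ → ℝ) (hF0 : ∀ i, 0 ≤ F i)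
    (hF1 : ∀ i, F i ≤ 3 * ((ℓ : ℝ) * y) ^ 1) (B : Finset (Fin ℓ)) (hB : B.card ≤ m)
    (hF2 : ∀ i ∉ B, F i ≤ 3 * ((ℓ : ℝ) * y) ^ (n + 2)) :
    (1 / (ℓ : ℝ)) * ∑ i, F i ^ α < (ℓ : ℝ) ^ (-(1 : ℝ) / 2) * gfun α y := by
  obtain ⟨h0, h1⟩ := hα
  obtain ⟨y0, y1⟩ := hy
  have hl2 : (2 : ℝ) ≤ ℓ := by exact_mod_cast hℓ
  have hl0 : (0 : ℝ) < ℓ := by linarith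
  have hy1 : (ℓ : ℝ) ^ 2 * y < 1 := by
    rwa [lt_div_iff₀ (by positivity), mul_comm] at y1
  have hy2 : y ≤ 1 / 2 := by nlinarith
  have h3 : (3 : ℝ) ^ α ≤ 2 := by
    calc (3 : ℝ) ^ α ≤ 4 ^ α := Real.rpow_le_rpow (by norm_num) (by norm_num) h0.le
      _ ≤ 4 ^ (1 / 2 : ℝ) := Real.rpow_le_rpow_of_exponent_le (by norm_num) (by linarith)
      _ = 2 := by
        rw [show (4 : ℝ) = 2 ^ (2 : ℝ) by norm_num, ← Real.rpow_mul (by norm_num)]; norm_num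
  have hya : 0 < y ^ α := Real.rpow_pos_of_pos y0 _
  have hl16 : (ℓ : ℝ) ^ α ≤ (ℓ : ℝ) ^ (1 / 16 : ℝ) :=
    Real.rpow_le_rpow_of_exponent_le (by linarith) h1.le
  have hl16' : 1 ≤ (ℓ : ℝ) ^ (1 / 16 : ℝ) := by linarith
  have bad : ∀ i, F i ^ α ≤ 2 * (ℓ : ℝ) ^ (1 / 16 : ℝ) * y ^ α := by
    intro i
    calc F i ^ α ≤ (3 * ((ℓ : ℝ) * y) ^ 1) ^ α := Real.rpow_le_rpow (hF0 i) (hF1 i) h0.le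
      _ = 3 ^ α * (ℓ : ℝ) ^ α * y ^ α := by
        rw [pow_one, Real.mul_rpow (by norm_num) (by positivity),
          Real.mul_rpow hl0.le y0.le, mul_assoc]
      _ ≤ _ := by gcongr
  have good : ∀ i ∉ B, F i ^ α ≤ 2 * y ^ α / ℓ := by
    intro i hi
    have hle : ((ℓ : ℝ) * y) ^ (n + 2) ≤ ((ℓ : ℝ) ^ n)⁻¹ * y := by
      rw [pow_add, ← inv_pow]
      have e1 : (ℓ : ℝ) * y ≤ (ℓ : ℝ)⁻¹ := by
        rw [← one_div, le_div_iff₀ hl0]; nlinarith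
      have e2 : ((ℓ : ℝ) * y) ^ 2 ≤ y := by nlinarith
      gcongr
    calc F i ^ α ≤ (3 * (((ℓ : ℝ) ^ n)⁻¹ * y)) ^ α :=
          Real.rpow_le_rpow (hF0 i) ((hF2 i hi).trans (by gcongr)) h0.le
      _ = 3 ^ α * y ^ α / ((ℓ : ℝ) ^ α) ^ n := by
        rw [Real.mul_rpow (by norm_num) (by positivity), Real.mul_rpow (by positivity) y0.le,
          Real.inv_rpow (by positivity), ← Real.rpow_natCast, ← Real.rpow_natCast,
          ← Real.rpow_mul hl0.le, ← Real.rpow_mul hl0.le, mul_comm (n : ℝ) α]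
        field_simp
      _ ≤ 2 * y ^ α / ℓ := by
        have : (ℓ : ℝ) ≤ ((ℓ : ℝ) ^ α) ^ n := hn.trans (pow_le_pow_left₀ (by norm_num) h2 n)
        gcongr
  have hsum : ∑ i, F i ^ α ≤ 2 * ((m : ℝ) + 1) * (ℓ : ℝ) ^ (1 / 16 : ℝ) * y ^ α := by
    calc ∑ i, F i ^ α
        ≤ ∑ i, ((if i ∈ B then 2 * (ℓ : ℝ) ^ (1 / 16 : ℝ) * y ^ α else 0) + 2 * y ^ α / ℓ) := by
          refine Finset.sum_le_sum fun i _ => ?_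
          have : 0 ≤ 2 * y ^ α / ℓ := by positivity
          split_ifs with hi
          · linarith [bad i]
          · linarith [good i hi]
      _ = B.card * (2 * (ℓ : ℝ) ^ (1 / 16 : ℝ) * y ^ α) + 2 * y ^ α := by
          rw [Finset.sum_add_distrib, Finset.sum_ite_mem]
          simp
          field_simp
      _ ≤ m * (2 * (ℓ : ℝ) ^ (1 / 16 : ℝ) * y ^ α) + (ℓ : ℝ) ^ (1 / 16 : ℝ) * (2 * y ^ α) := by
          have : (B.card : ℝ) ≤ m := by exact_mod_cast hB
          refine add_le_add (by gcongr) ?_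
          exact le_mul_of_one_le_left (by positivity) hl16'
      _ = _ := by ring
  have hg : y ^ α / 2 ≤ gfun α y := by
    have : 1 / 2 ≤ (1 - y) ^ α := by
      calc (1 / 2 : ℝ) ≤ 1 - y := by linarith
        _ = (1 - y) ^ (1 : ℝ) := (Real.rpow_one _).symm
        _ ≤ _ := Real.rpow_le_rpow_of_exponent_ge (by linarith) (by linarith) (by linarith)
    rw [gfun]
    nlinarith
  have hhalf : (ℓ : ℝ) ^ (-(1 : ℝ) / 2) =
      (1 / (ℓ : ℝ)) * ((ℓ : ℝ) ^ (7 / 16 : ℝ) * (ℓ : ℝ) ^ (1 / 16 : ℝ)) := by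
    rw [← Real.rpow_add hl0, one_div, ← Real.rpow_neg_one, ← Real.rpow_add hl0]
    norm_num
  calc (1 / (ℓ : ℝ)) * ∑ i, F i ^ α
      ≤ (1 / (ℓ : ℝ)) * (2 * ((m : ℝ) + 1) * (ℓ : ℝ) ^ (1 / 16 : ℝ) * y ^ α) := by gcongr
    _ = (1 / (ℓ : ℝ)) * ((4 * ((m : ℝ) + 1)) * (ℓ : ℝ) ^ (1 / 16 : ℝ)) * (y ^ α / 2) := by ring
    _ < (1 / (ℓ : ℝ)) * ((ℓ : ℝ) ^ (7 / 16 : ℝ) * (ℓ : ℝ) ^ (1 / 16 : ℝ)) * (y ^ α / 2) := by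
        gcongr
    _ = (ℓ : ℝ) ^ (-(1 : ℝ) / 2) * (y ^ α / 2) := by rw [hhalf]
    _ ≤ _ := by gcongr

/-- A kernel for which both low-weight events fail satisfies the desired bound near both
endpoints. -/
lemma lam_lt_of_not_LowWt {α : ℝ} (hα : α ∈ Set.Ioo (0 : ℝ) (1 / 16)) {ℓ : ℕ} (hℓ : 2 ≤ ℓ)
    (h2 : 2 ≤ (ℓ : ℝ) ^ α) {n m : ℕ} (hn : (ℓ : ℝ) ≤ 2 ^ n)
    (hm : 4 * ((m : ℝ) + 1) < (ℓ : ℝ) ^ (7 / 16 : ℝ)) {T₁ T₂ : Finset (Fin ℓ)}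
    (hT₁ : T₁.card ≤ m) (hT₂ : T₂.card ≤ m) (hlt₁ : ∀ i ∉ T₁, ∀ j ∈ T₁, j < i)
    (hlt₂ : ∀ i ∉ T₂, ∀ j ∈ T₂, i < j) (K : Matrix.GeneralLinearGroup (Fin ℓ) (ZMod 2))
    (hK₁ : ¬ LowWt (n + 2) T₁ (K : Matrix (Fin ℓ) (Fin ℓ) (ZMod 2))⁻¹.transpose)
    (hK₂ : ¬ LowWt (n + 2) T₂ (K : Matrix (Fin ℓ) (Fin ℓ) (ZMod 2))) {z : ℝ}
    (hz : z ∈ Set.Ioo (0 : ℝ) (1 / (ℓ : ℝ) ^ 2) ∪ Set.Ioo (1 - 1 / (ℓ : ℝ) ^ 2) 1) :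
    lam ℓ (K : Matrix (Fin ℓ) (Fin ℓ) (ZMod 2)) α z < (ℓ : ℝ) ^ (-(1 : ℝ) / 2) := by
  have hl2 : (2 : ℝ) ≤ ℓ := by exact_mod_cast hℓ
  have hl0 : (0 : ℝ) < ℓ := by linarith
  have hinv : 1 / (ℓ : ℝ) ^ 2 ≤ 1 / ℓ :=
    one_div_le_one_div_of_le hl0 (by nlinarith)
  have hinv' : 1 / (ℓ : ℝ) ≤ 1 / 2 := one_div_le_one_div_of_le (by norm_num) hl2
  have hz01 : z ∈ Set.Ioo (0 : ℝ) 1 := by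
    rcases hz with ⟨a, b⟩ | ⟨a, b⟩
    · exact ⟨a, by linarith⟩
    · exact ⟨by linarith, b⟩
  have hg : 0 < gfun α z :=
    mul_pos (Real.rpow_pos_of_pos hz01.1 _) (Real.rpow_pos_of_pos (by linarith [hz01.2]) _)
  rw [lam, div_lt_iff₀ hg]
  have hf0 := fun i => fK_nonneg ℓ (K : Matrix (Fin ℓ) (Fin ℓ) (ZMod 2)) i hz01
  have hf1 := fun i => fK_le_one ℓ (K : Matrix (Fin ℓ) (Fin ℓ) (ZMod 2)) i hz01
  rcases hz with hz | hz
  · have hlz : (ℓ : ℝ) * z ≤ 1 := by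
      have := hz.2.le.trans hinv
      rwa [le_div_iff₀ hl0, mul_comm] at this
    refine lt_of_le_of_lt ?_ (average_lt hα hℓ h2 hn hm hz
      (fun i => fK ℓ (K : Matrix (Fin ℓ) (Fin ℓ) (ZMod 2)) i z) hf0 ?_ T₁ hT₁ ?_)
    · gcongr with i
      exact (gfun_le_rpow hα.1 (hf0 i) (hf1 i)).1
    · intro i
      exact sum_tail_le hℓ hz01.1 hlz 1 _ fun S hS => (le_card_of_not_decodable hS).1
    · intro i hi
      exact sum_tail_le hℓ hz01.1 hlz _ _ fun S hS =>
        (le_card_of_not_decodable hS).2 _ T₁ (hlt₁ i hi) hK₁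
  · have hy : 1 - z ∈ Set.Ioo (0 : ℝ) (1 / (ℓ : ℝ) ^ 2) :=
      ⟨by linarith [hz.2], by linarith [hz.1]⟩
    have hlz : (ℓ : ℝ) * (1 - z) ≤ 1 := by
      have := hy.2.le.trans hinv
      rwa [le_div_iff₀ hl0, mul_comm] at this
    rw [← gfun_symm α z]
    refine lt_of_le_of_lt ?_ (average_lt hα hℓ h2 hn hm hy
      (fun i => 1 - fK ℓ (K : Matrix (Fin ℓ) (Fin ℓ) (ZMod 2)) i z)
      (fun i => sub_nonneg.2 (hf1 i)) ?_ T₂ hT₂ ?_)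
    · gcongr with i
      exact (gfun_le_rpow hα.1 (hf0 i) (hf1 i)).2
    · intro i
      simp only [one_sub_fK]
      exact sum_tail_le hℓ hy.1 hlz 1 _ fun S hS => (le_card_of_decodable hS).1
    · intro i hi
      simp only [one_sub_fK]
      exact sum_tail_le hℓ hy.1 hlz _ _ fun S hS =>
        (le_card_of_decodable hS).2 _ T₂ (hlt₂ i hi) hK₂

/-- An event whose complement is covered by two events of probability at most `1 / (4ℓ)` each has
probability greater than `1 - 1 / ℓ`. -/
lemma fracGL_gt {ℓ : ℕ} (hℓ : 2 ≤ ℓ)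
    (P Q R : Matrix.GeneralLinearGroup (Fin ℓ) (ZMod 2) → Prop)
    (hPQR : ∀ K, ¬ Q K → ¬ R K → P K)
    (hQ : 4 * ℓ * (Finset.univ.filter Q).card ≤
      Fintype.card (Matrix.GeneralLinearGroup (Fin ℓ) (ZMod 2)))
    (hR : 4 * ℓ * (Finset.univ.filter R).card ≤
      Fintype.card (Matrix.GeneralLinearGroup (Fin ℓ) (ZMod 2))) :
    fracGL ℓ P > 1 - 1 / (ℓ : ℝ) := by
  set G := Fintype.card (Matrix.GeneralLinearGroup (Fin ℓ) (ZMod 2)) with hG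
  have hG0 : 0 < G := Fintype.card_pos
  have hcover : G ≤ (Finset.univ.filter P).card +
      ((Finset.univ.filter Q).card + (Finset.univ.filter R).card) := by
    rw [hG, ← Finset.card_univ]
    refine le_trans (Finset.card_le_card (t := Finset.univ.filter P ∪
      (Finset.univ.filter Q ∪ Finset.univ.filter R)) ?_) ?_
    · intro K _
      simp only [Finset.mem_union, Finset.mem_filter, Finset.mem_univ, true_and]
      by_contra! h
      exact h.1 (hPQR K h.2.1 h.2.2)
    · refine (Finset.card_union_le _ _).trans ?_
      gcongr
      exact Finset.card_union_le _ _
  have hl0 : (0 : ℝ) < ℓ := by exact_mod_cast (by omega : 0 < ℓ)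
  have hG0' : (0 : ℝ) < G := by exact_mod_cast hG0
  have c1 : (G : ℝ) ≤ (Finset.univ.filter P).card +
      ((Finset.univ.filter Q).card + (Finset.univ.filter R).card) := by exact_mod_cast hcover
  have c2 : 4 * (ℓ : ℝ) * (Finset.univ.filter Q).card ≤ G := by exact_mod_cast hQ
  have c3 : 4 * (ℓ : ℝ) * (Finset.univ.filter R).card ≤ G := by exact_mod_cast hR
  rw [fracGL, gt_iff_lt, lt_div_iff₀ hG0']
  have key : (ℓ : ℝ) * ((1 - 1 / (ℓ : ℝ)) * G) < ℓ * (Finset.univ.filter P).card := by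
    have : (ℓ : ℝ) * ((1 - 1 / (ℓ : ℝ)) * G) = ℓ * G - G := by field_simp
    rw [this]
    nlinarith
  exact lt_of_mul_lt_mul_left key hl0.le

theorem stmt7 (α : ℝ) (hα : α ∈ Set.Ioo (0 : ℝ) (1 / 16)) (ℓ : ℕ) (hℓ : 2 ≤ ℓ)
    (hcond : Real.logb 2 ℓ / Real.logb 2 (Real.logb 2 ℓ) ≥ 1 / α) :
    fracGL ℓ (fun K =>
        ∀ z ∈ Set.Ioo (0 : ℝ) (1 / (ℓ : ℝ) ^ 2) ∪
            Set.Ioo (1 - 1 / (ℓ : ℝ) ^ 2) 1,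
          lam ℓ (K : Matrix (Fin ℓ) (Fin ℓ) (ZMod 2)) α z <
            (ℓ : ℝ) ^ (-(1 : ℝ) / 2)) >
      1 - 1 / (ℓ : ℝ) := by
  obtain ⟨h2, hL8, hL16⟩ := growth hα hℓ hcond
  set L := Real.logb 2 ℓ with hL
  have hl2 : (2 : ℝ) ≤ ℓ := by exact_mod_cast hℓ
  have hl0 : (0 : ℝ) < ℓ := by linarith
  set n := ⌈L⌉₊ with hn
  have hnL : L ≤ n := Nat.le_ceil L
  have hnL' : (n : ℝ) < L + 1 := Nat.ceil_lt_add_one (by linarith)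
  have hln : (ℓ : ℝ) ≤ 2 ^ n := by
    rw [← Real.rpow_natCast, ← Real.rpow_logb (b := 2) (by norm_num) (by norm_num) hl0]
    exact Real.rpow_le_rpow_of_exponent_le (by norm_num) hnL
  have hln' : ℓ ≤ 2 ^ n := by exact_mod_cast hln
  -- `2 ^ m = 4 (2 ^ n) ^ (n + 3)` absorbs the union bound `ℓ ^ (n + 2)` with a factor `4ℓ` to spare.
  obtain ⟨m, hm⟩ : ∃ m, m = n * (n + 3) + 2 := ⟨_, rfl⟩
  have hroot : L ^ (3 : ℕ) ≤ (ℓ : ℝ) ^ (7 / 16 : ℝ) := by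
    calc L ^ (3 : ℕ) = (L ^ (16 : ℕ)) ^ (3 / 16 : ℝ) := by
          rw [← Real.rpow_natCast, ← Real.rpow_natCast, ← Real.rpow_mul (by linarith)]
          norm_num
      _ ≤ (ℓ : ℝ) ^ (3 / 16 : ℝ) := Real.rpow_le_rpow (by positivity) hL16.le (by norm_num)
      _ ≤ _ := Real.rpow_le_rpow_of_exponent_le (by linarith) (by norm_num)
  have hm4 : 4 * ((m : ℝ) + 1) < (ℓ : ℝ) ^ (7 / 16 : ℝ) := by
    refine lt_of_lt_of_le ?_ hroot
    rw [hm]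
    push_cast
    have a1 : (n : ℝ) * (n + 3) ≤ (L + 1) * (L + 4) := by
      have : (0 : ℝ) ≤ n := Nat.cast_nonneg n
      nlinarith
    nlinarith [mul_nonneg (sub_nonneg.2 hL8) (sq_nonneg L)]
  have hmℓ : m ≤ ℓ := by
    have : (ℓ : ℝ) ^ (7 / 16 : ℝ) ≤ (ℓ : ℝ) ^ (1 : ℝ) :=
      Real.rpow_le_rpow_of_exponent_le (by linarith) (by norm_num)
    rw [Real.rpow_one] at this
    have h4 : (m : ℝ) ≤ ℓ := by linarith [(Nat.cast_nonneg m : (0 : ℝ) ≤ m)]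
    exact_mod_cast h4
  have hpow : 4 * ℓ * ℓ ^ (n + 2) ≤ 2 ^ m := by
    calc 4 * ℓ * ℓ ^ (n + 2) = ℓ ^ (n + 3) * 4 := by ring
      _ ≤ (2 ^ n) ^ (n + 3) * 4 := by gcongr
      _ = 2 ^ m := by rw [hm, ← pow_mul, pow_add _ _ 2]; norm_num
  let T₁ : Finset (Fin ℓ) := Finset.univ.filter fun j => (j : ℕ) < m
  let T₂ : Finset (Fin ℓ) := Finset.univ.filter fun j => ℓ - m ≤ (j : ℕ)
  have hT₁ : T₁.card = m := by
    rw [Fin.card_filter_val_lt, min_eq_right hmℓ]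
  have hT₂ : T₂.card = m := by
    have h := Finset.card_filter_add_card_filter_not (s := (Finset.univ : Finset (Fin ℓ)))
      (fun j => (j : ℕ) < ℓ - m)
    simp only [not_lt, Fin.card_filter_val_lt, Finset.card_univ, Fintype.card_fin] at h
    change T₂.card = m
    change _ + T₂.card = ℓ at h
    omega
  have bound : ∀ c, c * 2 ^ m ≤ ℓ ^ (n + 2) *
      Fintype.card (Matrix.GeneralLinearGroup (Fin ℓ) (ZMod 2)) →
      4 * ℓ * c ≤ Fintype.card (Matrix.GeneralLinearGroup (Fin ℓ) (ZMod 2)) := by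
    intro c hc
    have hpos : 0 < ℓ ^ (n + 2) := by positivity
    refine Nat.le_of_mul_le_mul_left ?_ hpos
    calc ℓ ^ (n + 2) * (4 * ℓ * c) = c * (4 * ℓ * ℓ ^ (n + 2)) := by ring
      _ ≤ c * 2 ^ m := Nat.mul_le_mul_left _ hpow
      _ ≤ _ := hc
  have d₁ := card_LowWt_dual_mul_le hℓ (n + 2) T₁
  have d₂ := card_LowWt_mul_le hℓ (n + 2) T₂
  rw [hT₁] at d₁
  rw [hT₂] at d₂
  refine fracGL_gt hℓ _ _ _ (fun K hK₁ hK₂ z hz => ?_) (bound _ d₁) (bound _ d₂)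
  refine lam_lt_of_not_LowWt hα hℓ h2 hln hm4 hT₁.le hT₂.le ?_ ?_ K hK₁ hK₂ hz
  · intro i hi j hj
    simp only [T₁, Finset.mem_filter, Finset.mem_univ, true_and, not_lt] at hi hj
    exact Fin.lt_def.2 (by omega)
  · intro i hi j hj
    simp only [T₂, Finset.mem_filter, Finset.mem_univ, true_and, not_le] at hi hj
    exact Fin.lt_def.2 (by omega)

end
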